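/- The m vectors r_0, r_1, …, r_{m−1} are pairwise distinct, and they are exactly the positive roots of the dihedral root system generated by α and β: {r_0, …, r_{m−1}} = { g·α : g ∈ Γ_{α,β} } ∪ { g·β : g ∈ Γ_{α,β} } intersected with the cone { xα + yβ : x ≥ 0, y ≥ 0 }. -/

import Mathlib

/-!
Put `c = -⟪α, β⟫` and `v k = U_k(c) α + U_{k-1}(c) β` for `k : ℤ`, where `U_k` is the Chebyshev
polynomial of the second kind. The Chebyshev recurrence says exactly that `s_α (v k) = -v (-k)`,
and `v` is symmetric in `α` and `β` up to the relabelling `k ↦ -1 - k` and a sign. Hence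
`r_j = v j`, and `{± v k}` is stable under the dihedral group. When `c = cos θ`, the vector `v k`
is the unit vector at angle `k θ` from `α`, with coordinates `sin ((k + 1) θ) / sin θ` and
`sin (k θ) / sin θ`. For `θ = π / m` these are nonnegative for `0 ≤ k < m`, and `v (k + m) = -v k`,
so every root is `± r_j` with `j < m`; the negative sign is impossible in the cone because the cone
contains no line.
-/

noncomputable section

open scoped RealInnerProductSpace

/-- Alternating product `x·y·x·⋯` with `m` factors, starting with `x`. -/
def altProd {M : Type*} [Monoid M] (x y : M) : ℕ → M
  | 0 => 1
  | (j + 1) => x * altProd y x j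

/-- The Euclidean plane. -/
abbrev E2 := EuclideanSpace ℝ (Fin 2)

/-- Orthogonal reflection of the plane fixing the hyperplane `α^⊥`. -/
def refl2 (α : E2) : E2 ≃ₗᵢ[ℝ] E2 := Submodule.reflection (ℝ ∙ α)ᗮ

/-- The root sequence `r_0 = α, r_1 = s_α(β), r_2 = s_α s_β(α), …`. -/
def rootSeq (α β : E2) (j : ℕ) : E2 :=
  altProd (refl2 α) (refl2 β) j (if Even j then α else β)

open Real Set Polynomial.Chebyshev

lemma altProd_mem {M : Type*} [Monoid M] {H : Submonoid M} {x y : M} (hx : x ∈ H) (hy : y ∈ H)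
    (j : ℕ) : altProd x y j ∈ H := by
  induction j generalizing x y with
  | zero => exact H.one_mem
  | succ j ih => exact H.mul_mem hx (ih hy hx)

lemma mapsTo_of_mem_closure {R F : Type*} [Semiring R] [SeminormedAddCommGroup F] [Module R F]
    {T : Set (F ≃ₗᵢ[R] F)} {S : Set F} (hT : ∀ s ∈ T, MapsTo s S S)
    (hT_inv : ∀ s ∈ T, MapsTo (s⁻¹ : F ≃ₗᵢ[R] F) S S) {g : F ≃ₗᵢ[R] F}
    (hg : g ∈ Subgroup.closure T) : MapsTo g S S := by
  induction hg using Subgroup.closure_induction_left with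
  | one => exact mapsTo_id S
  | mul_left s hs g _ ih => exact (hT s hs).comp ih
  | inv_mul_cancel s hs g _ ih => exact (hT_inv s hs).comp ih

lemma exists_lt_eq_or_eq_neg_of_antiperiodic {V : Type*} [InvolutiveNeg V] {f : ℤ → V} {m : ℕ}
    (hf : Function.Antiperiodic f m) (hm : m ≠ 0) (k : ℤ) :
    ∃ i < m, f k = f i ∨ f k = -f i := by
  have hm_pos : (0 : ℤ) < m := by omega
  have hmod_lt := Int.emod_lt_of_pos k hm_pos
  obtain ⟨i, hi⟩ := Int.eq_ofNat_of_zero_le (Int.emod_nonneg k hm_pos.ne')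
  have hk : k = i + k / m * m := by rw [← hi, Int.emod_add_ediv_mul]
  refine ⟨i, by omega, ?_⟩
  obtain ⟨q, hq | hq⟩ := Int.even_or_odd' (k / m) <;> rw [hq] at hk <;> rw [hk]
  · exact .inl (hf.even_zsmul_periodic q i)
  · exact .inr (hf.odd_zsmul_antiperiodic q i)

section Chebyshev

variable {m : ℕ}

lemma sin_pi_div_pos (hm : 2 ≤ m) : 0 < sin (π / m) :=
  sin_pos_of_pos_of_lt_pi (by positivity)
    (div_lt_self pi_pos (by exact_mod_cast hm))

lemma eval_U_cos_pi_div_nonneg (hm : 2 ≤ m) {k : ℤ} (hk : -1 ≤ k) (hkm : k < m) :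
    0 ≤ (U ℝ k).eval (cos (π / m)) := by
  have hk₀ : (0 : ℝ) ≤ k + 1 := by exact_mod_cast (by omega : 0 ≤ k + 1)
  have hk₁ : (k + 1 : ℝ) ≤ m := by exact_mod_cast (by omega : k + 1 ≤ m)
  have hangle : (k + 1) * (π / m) ≤ π :=
    calc (k + 1) * (π / m) ≤ m * (π / m) := by gcongr
      _ = π := by field_simp
  refine nonneg_of_mul_nonneg_left ?_ (sin_pi_div_pos hm)
  rw [U_real_cos]
  exact sin_nonneg_of_nonneg_of_le_pi (by positivity) hangle

lemma antiperiodic_eval_U_cos_pi_div (hm : 2 ≤ m) :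
    Function.Antiperiodic (fun k : ℤ ↦ (U ℝ k).eval (cos (π / m))) m := by
  intro k
  have hangle : (((k + m : ℤ) : ℝ) + 1) * (π / m) = (k + 1) * (π / m) + π := by
    push_cast; field_simp; ring
  apply mul_right_cancel₀ (sin_pi_div_pos hm).ne'
  rw [U_real_cos, hangle, sin_add_pi, neg_mul, U_real_cos]

end Chebyshev

section Root

variable {E : Type*} [NormedAddCommGroup E] [InnerProductSpace ℝ E] {α β : E}

lemma reflection_smul_add_smul (hα : ‖α‖ = 1) (x y : ℝ) :
    (ℝ ∙ α)ᗮ.reflection (x • α + y • β) = (2 * -⟪α, β⟫ * y - x) • α + y • β := by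
  rw [Submodule.reflection_orthogonal_apply, Submodule.reflection_singleton_apply, inner_add_right,
    inner_smul_right, inner_smul_right, inner_self_eq_one_of_norm_eq_one hα, hα]
  simp only [RCLike.ofReal_one]
  module

/-- The roots `v k` of the dihedral root system in angular order, with `v 0 = α` and `v (-1) = -β`.
They are indexed by all integers so that the reflections in `α^⊥` and `β^⊥` act by `k ↦ -k` and
`k ↦ -2 - k`, up to sign. -/
def dihedralRoot (α β : E) (k : ℤ) : E :=
  (U ℝ k).eval (-⟪α, β⟫) • α + (U ℝ (k - 1)).eval (-⟪α, β⟫) • β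

lemma dihedralRoot_zero : dihedralRoot α β 0 = α := by
  simp [dihedralRoot]

lemma dihedralRoot_swap (k : ℤ) : dihedralRoot β α k = -dihedralRoot α β (-1 - k) := by
  have h₁ : U ℝ (-1 - k) = -U ℝ (k - 1) := by
    rw [← U_neg_sub_one]; ring_nf
  have h₂ : U ℝ (-1 - k - 1) = -U ℝ k := by
    rw [← U_neg_sub_two]; ring_nf
  simp only [dihedralRoot, h₁, h₂, Polynomial.eval_neg, real_inner_comm α β]
  module

lemma reflection_dihedralRoot (hα : ‖α‖ = 1) (k : ℤ) :
    (ℝ ∙ α)ᗮ.reflection (dihedralRoot α β k) = -dihedralRoot α β (-k) := by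
  have h : 2 * -⟪α, β⟫ * (U ℝ (k - 1)).eval (-⟪α, β⟫) - (U ℝ k).eval (-⟪α, β⟫) =
      (U ℝ (k - 2)).eval (-⟪α, β⟫) := by
    simp [U_sub_two]
  rw [dihedralRoot, reflection_smul_add_smul hα, h, dihedralRoot, U_neg, U_neg_sub_one,
    Polynomial.eval_neg, Polynomial.eval_neg]
  module

/-- The sequence `r_0 = α, r_1 = s_α β, r_2 = s_α s_β α, …` in an arbitrary real inner product
space; in the plane it is `rootSeq`. -/
def altRoot (α β : E) (j : ℕ) : E :=
  altProd (ℝ ∙ α)ᗮ.reflection (ℝ ∙ β)ᗮ.reflection j (if Even j then α else β)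

lemma altRoot_succ (α β : E) (j : ℕ) :
    altRoot α β (j + 1) = (ℝ ∙ α)ᗮ.reflection (altRoot β α j) := by
  have hparity : (if Even (j + 1) then α else β) = if Even j then β else α := by
    simp only [Nat.even_add_one, ite_not]
  rw [altRoot, hparity]
  rfl

lemma altRoot_eq_dihedralRoot (hα : ‖α‖ = 1) (hβ : ‖β‖ = 1) (j : ℕ) :
    altRoot α β j = dihedralRoot α β j := by
  induction j generalizing α β with
  | zero => exact dihedralRoot_zero.symm
  | succ j ih =>
    calc altRoot α β (j + 1)
        = (ℝ ∙ α)ᗮ.reflection (-dihedralRoot α β (-1 - j)) := by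
          rw [altRoot_succ, ih hβ hα, dihedralRoot_swap]
      _ = dihedralRoot α β (-(-1 - j)) := by
          rw [map_neg, reflection_dihedralRoot hα, neg_neg]
      _ = dihedralRoot α β (j + 1 : ℕ) := by
          congr 1; push_cast; ring

/-- The orbit `Γ·{α, β}` of the simple roots under the group generated by the reflections in
`α^⊥` and `β^⊥`. -/
def rootOrbit (α β : E) : Set E :=
  {v | ∃ g ∈ Subgroup.closure {(ℝ ∙ α)ᗮ.reflection, (ℝ ∙ β)ᗮ.reflection}, v = g α ∨ v = g β}

/-- The cone `{xα + yβ : x, y ≥ 0}`, which singles out the positive roots. -/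
def positiveCone (α β : E) : Set E :=
  {v | ∃ x y : ℝ, 0 ≤ x ∧ 0 ≤ y ∧ v = x • α + y • β}

lemma altRoot_mem_rootOrbit (α β : E) (j : ℕ) : altRoot α β j ∈ rootOrbit α β := by
  have hmem : altProd (ℝ ∙ α)ᗮ.reflection (ℝ ∙ β)ᗮ.reflection j ∈
      Subgroup.closure {(ℝ ∙ α)ᗮ.reflection, (ℝ ∙ β)ᗮ.reflection} :=
    altProd_mem (H := (Subgroup.closure _).toSubmonoid) (Subgroup.subset_closure (by simp))
      (Subgroup.subset_closure (by simp)) j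
  refine ⟨_, hmem, ?_⟩
  rw [altRoot]
  split_ifs
  · exact .inl rfl
  · exact .inr rfl

/-- The set `{± v k | k : ℤ}`, which contains every root and is stable under both reflections. -/
def signedRoots (α β : E) : Set E :=
  {v | ∃ k, v = dihedralRoot α β k ∨ v = -dihedralRoot α β k}

lemma signedRoots_swap_subset (α β : E) : signedRoots α β ⊆ signedRoots β α := by
  rintro v ⟨k, hv⟩
  refine ⟨-1 - k, ?_⟩
  rwa [dihedralRoot_swap, sub_sub_cancel, neg_neg, or_comm]

lemma signedRoots_comm (α β : E) : signedRoots α β = signedRoots β α :=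
  (signedRoots_swap_subset α β).antisymm (signedRoots_swap_subset β α)

lemma mapsTo_reflection_signedRoots (hα : ‖α‖ = 1) :
    MapsTo (ℝ ∙ α)ᗮ.reflection (signedRoots α β) (signedRoots α β) := by
  rintro _ ⟨k, rfl | rfl⟩ <;> refine ⟨-k, ?_⟩
  · exact .inr (reflection_dihedralRoot hα k)
  · left; rw [map_neg, reflection_dihedralRoot hα, neg_neg]

lemma left_mem_signedRoots (α β : E) : α ∈ signedRoots α β :=
  ⟨0, .inl dihedralRoot_zero.symm⟩

lemma rootOrbit_subset_signedRoots (hα : ‖α‖ = 1) (hβ : ‖β‖ = 1) :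
    rootOrbit α β ⊆ signedRoots α β := by
  rintro v ⟨g, hg, hv⟩
  have hβ_maps : MapsTo (ℝ ∙ β)ᗮ.reflection (signedRoots α β) (signedRoots α β) := by
    rw [signedRoots_comm]
    exact mapsTo_reflection_signedRoots hβ
  have hmaps : MapsTo g (signedRoots α β) (signedRoots α β) := by
    refine mapsTo_of_mem_closure ?_ ?_ hg <;> rintro _ (rfl | rfl)
    · exact mapsTo_reflection_signedRoots hα
    · exact hβ_maps
    · rw [Submodule.reflection_inv]; exact mapsTo_reflection_signedRoots hα
    · rw [Submodule.reflection_inv]; exact hβ_maps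
  rcases hv with rfl | rfl
  · exact hmaps (left_mem_signedRoots α β)
  · exact hmaps (signedRoots_comm β α ▸ left_mem_signedRoots β α)

lemma inner_dihedralRoot {θ : ℝ} (hα : ‖α‖ = 1) (hβ : ‖β‖ = 1) (hαβ : ⟪α, β⟫ = -cos θ)
    (hθ : sin θ ≠ 0) (j k : ℤ) :
    ⟪dihedralRoot α β j, dihedralRoot α β k⟫ = cos ((j - k) * θ) := by
  have hU (i : ℤ) : (U ℝ i).eval (cos θ) * sin θ = sin (i * θ) * cos θ + cos (i * θ) * sin θ := by
    rw [U_real_cos, add_one_mul, sin_add]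
  have hU' (i : ℤ) : (U ℝ (i - 1)).eval (cos θ) * sin θ = sin (i * θ) := by
    rw [U_real_cos]; push_cast; ring_nf
  have hexpand (a b a' b' : ℝ) : ⟪a • α + b • β, a' • α + b' • β⟫ =
      a * a' + b * b' - cos θ * (a * b' + b * a') := by
    simp only [inner_add_left, inner_add_right, real_inner_smul_left, real_inner_smul_right,
      inner_self_eq_one_of_norm_eq_one hα, inner_self_eq_one_of_norm_eq_one hβ, real_inner_comm α β,
      hαβ]
    ring
  rw [dihedralRoot, dihedralRoot, hexpand, hαβ, neg_neg, sub_mul, cos_sub]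
  apply mul_right_cancel₀ (pow_ne_zero 2 hθ)
  calc _ = (U ℝ j).eval (cos θ) * sin θ * ((U ℝ k).eval (cos θ) * sin θ) +
        (U ℝ (j - 1)).eval (cos θ) * sin θ * ((U ℝ (k - 1)).eval (cos θ) * sin θ) -
        cos θ * ((U ℝ j).eval (cos θ) * sin θ * ((U ℝ (k - 1)).eval (cos θ) * sin θ) +
          (U ℝ (j - 1)).eval (cos θ) * sin θ * ((U ℝ k).eval (cos θ) * sin θ)) := by ring
    _ = _ := by
      rw [hU j, hU k, hU' j, hU' k]
      linear_combination -(sin (j * θ) * sin (k * θ)) * sin_sq_add_cos_sq θ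

lemma norm_dihedralRoot {θ : ℝ} (hα : ‖α‖ = 1) (hβ : ‖β‖ = 1) (hαβ : ⟪α, β⟫ = -cos θ)
    (hθ : sin θ ≠ 0) (k : ℤ) : ‖dihedralRoot α β k‖ = 1 := by
  have h := inner_dihedralRoot hα hβ hαβ hθ k k
  rw [sub_self, zero_mul, cos_zero, real_inner_self_eq_norm_sq] at h
  exact (pow_eq_one_iff_of_nonneg (norm_nonneg _) two_ne_zero).1 h

lemma neg_notMem_positiveCone (hα : ‖α‖ = 1) (hβ : ‖β‖ = 1) (hαβ : ⟪α, β⟫ ≠ -1) {v : E}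
    (hv : v ∈ positiveCone α β) (hv₀ : v ≠ 0) : -v ∉ positiveCone α β := by
  have hpos : 0 < 1 + ⟪α, β⟫ := by
    have hle : -1 ≤ ⟪α, β⟫ := by
      simpa [hα, hβ] using neg_le_of_abs_le (abs_real_inner_le_norm α β)
    linarith [hle.lt_of_ne' hαβ]
  have hheight (x y : ℝ) : ⟪α + β, x • α + y • β⟫ = (x + y) * (1 + ⟪α, β⟫) := by
    simp only [inner_add_left, inner_add_right, real_inner_smul_right,
      inner_self_eq_one_of_norm_eq_one hα, inner_self_eq_one_of_norm_eq_one hβ, real_inner_comm α β]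
    ring
  rintro ⟨x', y', hx', hy', hneg⟩
  obtain ⟨x, y, hx, hy, rfl⟩ := hv
  have hsum : (x + y + (x' + y')) * (1 + ⟪α, β⟫) = 0 := by
    rw [add_mul, ← hheight, ← hheight, ← hneg, inner_neg_right, add_neg_cancel]
  have hcoeff : x + y + (x' + y') = 0 := (mul_eq_zero.1 hsum).resolve_right hpos.ne'
  obtain rfl : x = 0 := by linarith
  obtain rfl : y = 0 := by linarith
  simp at hv₀

section PiDiv

variable {m : ℕ}

lemma antiperiodic_dihedralRoot (hm : 2 ≤ m) (hαβ : ⟪α, β⟫ = -cos (π / m)) :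
    Function.Antiperiodic (dihedralRoot α β) m := by
  intro k
  have hU := antiperiodic_eval_U_cos_pi_div hm
  simp only [dihedralRoot, hαβ, neg_neg, hU k, add_sub_right_comm, hU (k - 1)]
  module

lemma dihedralRoot_mem_positiveCone (hm : 2 ≤ m) (hαβ : ⟪α, β⟫ = -cos (π / m)) {k : ℤ}
    (hk : 0 ≤ k) (hkm : k < m) : dihedralRoot α β k ∈ positiveCone α β := by
  rw [dihedralRoot, hαβ, neg_neg]
  exact ⟨_, _, eval_U_cos_pi_div_nonneg hm (by omega) hkm,
    eval_U_cos_pi_div_nonneg hm (by omega) (by omega), rfl⟩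

lemma injOn_dihedralRoot (hm : 2 ≤ m) (hα : ‖α‖ = 1) (hβ : ‖β‖ = 1)
    (hαβ : ⟪α, β⟫ = -cos (π / m)) : InjOn (dihedralRoot α β) (Ico 0 (2 * m)) := by
  rintro j ⟨hj₀, hj⟩ k ⟨hk₀, hk⟩ hjk
  have hθ : 0 < π / m := by positivity
  have htwo_pi : 2 * π = 2 * m * (π / m) := by field_simp
  have hlower : (-(2 * m) : ℝ) < j - k := by exact_mod_cast (by omega : -(2 * m : ℤ) < j - k)
  have hupper : (j - k : ℝ) < 2 * m := by exact_mod_cast (by omega : j - k < (2 * m : ℤ))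
  have hcos : cos ((j - k) * (π / m)) = 1 := by
    rw [← inner_dihedralRoot hα hβ hαβ (sin_pi_div_pos hm).ne', hjk]
    exact inner_self_eq_one_of_norm_eq_one
      (norm_dihedralRoot hα hβ hαβ (sin_pi_div_pos hm).ne' k)
  rw [cos_eq_one_iff_of_lt_of_lt (by rw [htwo_pi, ← neg_mul]; gcongr)
    (by rw [htwo_pi]; gcongr), mul_eq_zero, or_iff_left hθ.ne', sub_eq_zero] at hcos
  exact_mod_cast hcos

lemma exists_altRoot_eq_of_mem_rootOrbit_of_mem_positiveCone (hm : 2 ≤ m) (hα : ‖α‖ = 1)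
    (hβ : ‖β‖ = 1) (hαβ : ⟪α, β⟫ = -cos (π / m)) {v : E} (hv : v ∈ rootOrbit α β)
    (hcone : v ∈ positiveCone α β) : ∃ j < m, v = altRoot α β j := by
  obtain ⟨j, hj, hvj⟩ : ∃ j < m, v = dihedralRoot α β j ∨ v = -dihedralRoot α β j := by
    obtain ⟨k, hk⟩ := rootOrbit_subset_signedRoots hα hβ hv
    obtain ⟨j, hj, hkj | hkj⟩ := exists_lt_eq_or_eq_neg_of_antiperiodic
      (antiperiodic_dihedralRoot hm hαβ) (by omega) k <;> rw [hkj] at hk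
    · exact ⟨j, hj, hk⟩
    · exact ⟨j, hj, by rwa [neg_neg, or_comm] at hk⟩
  refine ⟨j, hj, ?_⟩
  rw [altRoot_eq_dihedralRoot hα hβ]
  refine hvj.resolve_right fun hneg ↦ ?_
  have hne : dihedralRoot α β j ≠ 0 := by
    rw [← norm_ne_zero_iff, norm_dihedralRoot hα hβ hαβ (sin_pi_div_pos hm).ne']
    exact one_ne_zero
  have hinner : ⟪α, β⟫ ≠ -1 := by
    rw [hαβ, ne_eq, neg_inj]
    exact fun hcos ↦ (sin_pi_div_pos hm).ne' (sin_eq_zero_iff_cos_eq.2 (.inl hcos))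
  exact neg_notMem_positiveCone hα hβ hinner
    (dihedralRoot_mem_positiveCone hm hαβ (by omega) (by omega)) hne (hneg ▸ hcone)

end PiDiv

end Root

theorem rootSeq_eq_positive_roots_general {E : Type*} [NormedAddCommGroup E]
    [InnerProductSpace ℝ E] {m : ℕ} (hm : 2 ≤ m) {α β : E} (hα : ‖α‖ = 1) (hβ : ‖β‖ = 1)
    (hαβ : ⟪α, β⟫ = -cos (π / m)) :
    (∀ j < m, ∀ j' < m, altRoot α β j = altRoot α β j' → j = j') ∧
      {v : E | ∃ j < m, v = altRoot α β j} = rootOrbit α β ∩ positiveCone α β := by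
  constructor
  · intro j hj j' hj' h
    rw [altRoot_eq_dihedralRoot hα hβ, altRoot_eq_dihedralRoot hα hβ] at h
    exact_mod_cast injOn_dihedralRoot hm hα hβ hαβ ⟨by omega, by omega⟩ ⟨by omega, by omega⟩ h
  · apply Subset.antisymm
    · rintro _ ⟨j, hj, rfl⟩
      refine ⟨altRoot_mem_rootOrbit α β j, ?_⟩
      rw [altRoot_eq_dihedralRoot hα hβ]
      exact dihedralRoot_mem_positiveCone hm hαβ (by omega) (by omega)
    · rintro v ⟨hv, hcone⟩
      exact exists_altRoot_eq_of_mem_rootOrbit_of_mem_positiveCone hm hα hβ hαβ hv hcone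

/-- If `α, β` are unit vectors with `⟪α, β⟫ = −cos(π/m)`, the vectors
`r_0, …, r_{m−1}` are pairwise distinct and are exactly the positive roots of the dihedral
root system generated by `α` and `β`: the orbit `Γ_{α,β}·{α, β}` intersected with the cone
`{xα + yβ : x, y ≥ 0}`. -/
theorem rootSeq_eq_positive_roots (m : ℕ) (hm : 2 ≤ m) (α β : E2)
    (hα : ‖α‖ = 1) (hβ : ‖β‖ = 1)
    (hαβ : ⟪α, β⟫ = -Real.cos (Real.pi / m)) :
    (∀ j < m, ∀ j' < m, rootSeq α β j = rootSeq α β j' → j = j') ∧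
    {v : E2 | ∃ j < m, v = rootSeq α β j} =
      {v : E2 | ∃ g ∈ Subgroup.closure {refl2 α, refl2 β}, v = g α ∨ v = g β} ∩
        {v : E2 | ∃ x y : ℝ, 0 ≤ x ∧ 0 ≤ y ∧ v = x • α + y • β} :=
  rootSeq_eq_positive_roots_general hm hα hβ hαβ
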